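/- Let X be a complemented subspace of X_p. Suppose there exist positive constants c and δ such that for every ε > 0 there is ε' with 0 < ε' < ε such that for every N ∈ ℕ there exist x ∈ X with ‖x‖ = 1 and a finite set E ⊆ {N, N+1, …} satisfying (a) ‖x_{|[1,N]}‖ < N^{-1}, (b) |x_{|E}|_2 ≥ δ·|x|_2, and (c) ε ≥ c·|x_{|E}|_2 ≥ ω(E)^{(p-2)/(2p)} ≥ ε'. Then X contains a subspace which is isomorphic to X_p and is complemented in X_p. -/

import Mathlib

open scoped ENNReal

noncomputable section

/-- The sequence space `ℓ_p` (of real sequences), for a real exponent `p`. -/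
abbrev SeqP (p : ℝ) := lp (fun _ : ℕ => ℝ) (ENNReal.ofReal p)

/-- The sequence space `ℓ_2` (of real sequences). -/
abbrev Seq2 := lp (fun _ : ℕ => ℝ) 2

/-- The space `X_{p,w}`, realized as the submodule of `ℓ_p ⊕_∞ ℓ_2` consisting of the
pairs `(x, y)` with `y n = w n * x n`.  Since the norm on the product is the maximum of
the two norms, this is exactly the completion of the finitely supported sequences under
`‖a‖ = max {|a|_p, |a|_{2,w}}`, the element with coordinates `a` being identified with
the pair `(a, w·a)`. -/
def XpwMod (p : ℝ) (w : ℕ → ℝ) : Submodule ℝ (SeqP p × Seq2) where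
  carrier := {z | ∀ n, (z.2 : ℕ → ℝ) n = w n * (z.1 : ℕ → ℝ) n}
  add_mem' := by
    intro a b ha hb n
    simp only [Prod.fst_add, Prod.snd_add, lp.coeFn_add, Pi.add_apply, ha n, hb n]
    ring
  zero_mem' := by
    intro n
    simp
  smul_mem' := by
    intro c a ha n
    simp only [Prod.smul_fst, Prod.smul_snd, lp.coeFn_smul, Pi.smul_apply, ha n,
      smul_eq_mul]
    ring

/-- The space `X_{p,w}` with its natural norm `‖a‖ = max {|a|_p, |a|_{2,w}}`. -/
def Xpw (p : ℝ) (w : ℕ → ℝ) : Type := ↥(XpwMod p w)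

variable {p : ℝ} {w : ℕ → ℝ}

instance [Fact (1 ≤ ENNReal.ofReal p)] : NormedAddCommGroup (Xpw p w) :=
  inferInstanceAs (NormedAddCommGroup ↥(XpwMod p w))

instance [Fact (1 ≤ ENNReal.ofReal p)] : NormedSpace ℝ (Xpw p w) :=
  inferInstanceAs (NormedSpace ℝ ↥(XpwMod p w))

/-- The pair of coordinates (in `ℓ_p` and in weighted `ℓ_2`) of an element of `X_{p,w}`. -/
def Xpw.pair (x : Xpw p w) : SeqP p × Seq2 := (show ↥(XpwMod p w) from x).val

/-- The underlying sequence of coordinates of an element of `X_{p,w}`. -/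
def seq (x : Xpw p w) : ℕ → ℝ := (Xpw.pair x).1

/-- `|x|_p` for `x ∈ X_{p,w}`. -/
def nrmP (x : Xpw p w) : ℝ := ‖(Xpw.pair x).1‖

/-- `|x|_2 = |x|_{2,w}` for `x ∈ X_{p,w}`. -/
def nrm2 (x : Xpw p w) : ℝ := ‖(Xpw.pair x).2‖

/-- The ratio `r(x) = |x|_2 / |x|_p`. -/
def ratio (x : Xpw p w) : ℝ := nrm2 x / nrmP x

/-- `ω(E) = ∑_{n ∈ E} w_n^{2p/(p-2)}`. -/
def omegaE (p : ℝ) (w : ℕ → ℝ) (E : Set ℕ) : ℝ :=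
  ∑' n : E, w (n : ℕ) ^ (2 * p / (p - 2))

/-- The pairing `⟨x, y⟩ = ∑_n x_n y_n w_n²`. -/
def pairW (w : ℕ → ℝ) (x y : Xpw p w) : ℝ :=
  ∑' n, seq x n * seq y n * w n ^ 2

/-- `w` is a weight sequence suitable for Rosenthal's space `X_p`: it is positive and for
every `ε > 0`, `∑_{w_n < ε} w_n^{2p/(p-2)} = ∞`. -/
def IsXpWeight (p : ℝ) (w : ℕ → ℝ) : Prop :=
  (∀ n, 0 < w n) ∧
    ∀ ε : ℝ, 0 < ε →
      (∑' n : {n : ℕ | w n < ε}, ENNReal.ofReal (w (n : ℕ) ^ (2 * p / (p - 2)))) = ⊤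

theorem memℓp_indicator {q : ℝ≥0∞} (E : Set ℕ) {f : ℕ → ℝ} (hf : Memℓp f q) :
    Memℓp (E.indicator f) q := by
  rcases ENNReal.trichotomy q with hq | hq | hq
  · subst hq
    refine memℓp_zero ((memℓp_zero_iff.mp hf).subset ?_)
    intro i hi
    simp only [Set.mem_setOf_eq] at hi ⊢
    intro h
    exact hi (by simp [Set.indicator_apply, h])
  · subst hq
    obtain ⟨C, hC⟩ := (memℓp_infty_iff.mp hf)
    refine memℓp_infty ⟨C, ?_⟩
    rintro x ⟨i, rfl⟩
    exact le_trans (norm_indicator_le_norm_self f i) (hC ⟨i, rfl⟩)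
  · refine memℓp_gen (Summable.of_nonneg_of_le (fun i => ?_) (fun i => ?_)
      (hf.summable hq))
    · positivity
    · exact Real.rpow_le_rpow (norm_nonneg _) (norm_indicator_le_norm_self f i) hq.le

/-- The restriction `x ↦ x_{|E}` of elements of `X_{p,w}` to a set `E` of coordinates. -/
def restrict (E : Set ℕ) (x : Xpw p w) : Xpw p w :=
  show ↥(XpwMod p w) from
  ⟨(⟨E.indicator ((Xpw.pair x).1 : ℕ → ℝ), memℓp_indicator E (lp.memℓp (Xpw.pair x).1)⟩,
    ⟨E.indicator ((Xpw.pair x).2 : ℕ → ℝ), memℓp_indicator E (lp.memℓp (Xpw.pair x).2)⟩), by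
    intro n
    by_cases hn : n ∈ E
    · change E.indicator ((Xpw.pair x).2 : ℕ → ℝ) n = w n * E.indicator ((Xpw.pair x).1 : ℕ → ℝ) n
      rw [Set.indicator_of_mem hn, Set.indicator_of_mem hn]
      exact (show ↥(XpwMod p w) from x).2 n
    · change E.indicator ((Xpw.pair x).2 : ℕ → ℝ) n = w n * E.indicator ((Xpw.pair x).1 : ℕ → ℝ) n
      rw [Set.indicator_of_notMem hn, Set.indicator_of_notMem hn, mul_zero]⟩

/-!
The vectors provided for one fixed `ε` are small before `N`, and their own tails are small, so a
gliding hump produces an almost disjoint sequence of them, each dominated in weighted `ℓ_2`-norm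
by its core `E`. By (c) and Hölder's inequality, the orthogonal projections onto the cores are
bounded also in the `ℓ_p`-norm. Hence, if `v_k` is the weighted `ℓ_2`-norm of the `k`-th core, the
blocks span a complemented copy of `X_{p,v}`, and so do their small perturbations lying in `X`.

Letting `ε` run through the values `c w_m`, each one infinitely often, makes infinitely many of the
weights `v_k` lie between a positive constant and `w_m`, for every `m`. Grouping finitely many of
these into a set `G_m` with `ω(G_m)^{(p-2)/(2p)} ≈ w_m` gives blocks that span a complemented copy
of `X_{p,w}` in `X_{p,v}`, by the same criterion.
-/

section lpRestrict

variable {q : ℝ≥0∞} {ι : Type*} {E : ι → Set ℕ}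

/-- The restriction of a sequence in `ℓ_q` to a set of coordinates, as an element of `ℓ_q`: the
counterpart in each of the two components of `restrict`. -/
def lpRestrict (A : Set ℕ) (f : lp (fun _ : ℕ => ℝ) q) : lp (fun _ : ℕ => ℝ) q :=
  ⟨A.indicator f, memℓp_indicator A (lp.memℓp f)⟩

@[simp]
theorem lpRestrict_apply (A : Set ℕ) (f : lp (fun _ : ℕ => ℝ) q) (k : ℕ) :
    lpRestrict A f k = A.indicator f k := rfl

theorem norm_lpRestrict_le [Fact (1 ≤ q)] (A : Set ℕ) (f : lp (fun _ : ℕ => ℝ) q) :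
    ‖lpRestrict A f‖ ≤ ‖f‖ :=
  lp.norm_mono (zero_lt_one.trans_le Fact.out).ne' fun k => norm_indicator_le_norm_self f k

theorem exists_lp_eq_of_sum_rpow_le (hq : 0 < q.toReal) {a : ℕ → ℝ} {C : ℝ} (hC : 0 ≤ C)
    (h : ∀ s : Finset ℕ, ∑ n ∈ s, ‖a n‖ ^ q.toReal ≤ C ^ q.toReal) :
    ∃ g : lp (fun _ : ℕ => ℝ) q, ⇑g = a ∧ ‖g‖ ≤ C :=
  ⟨⟨a, memℓp_gen' h⟩, rfl, lp.norm_le_of_forall_sum_le hq hC h⟩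

theorem norm_lpRestrict_finset_rpow (hq : 0 < q.toReal) (s : Finset ℕ)
    (f : lp (fun _ : ℕ => ℝ) q) :
    ‖lpRestrict (s : Set ℕ) f‖ ^ q.toReal = ∑ k ∈ s, ‖f k‖ ^ q.toReal := by
  rw [lp.norm_rpow_eq_tsum hq, tsum_eq_sum (s := s)]
  · exact Finset.sum_congr rfl fun k hk => by
      rw [lpRestrict_apply, Set.indicator_of_mem (Finset.mem_coe.2 hk)]
  · intro k hk
    rw [lpRestrict_apply, Set.indicator_of_notMem (mt Finset.mem_coe.1 hk), norm_zero,
      Real.zero_rpow hq.ne']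

theorem sum_norm_lpRestrict_rpow_le (hq : 0 < q.toReal) (hE : Pairwise (Function.onFun Disjoint E))
    (f : lp (fun _ : ℕ => ℝ) q) (s : Finset ι) :
    ∑ n ∈ s, ‖lpRestrict (E n) f‖ ^ q.toReal ≤ ‖f‖ ^ q.toReal := by
  simp_rw [lp.norm_rpow_eq_tsum hq]
  have hsum : ∀ g : lp (fun _ : ℕ => ℝ) q, Summable fun k => ‖g k‖ ^ q.toReal :=
    fun g => (lp.memℓp g).summable hq
  have hind : ∀ n k, ‖lpRestrict (E n) f k‖ ^ q.toReal =
      (E n).indicator (fun k => ‖f k‖ ^ q.toReal) k := by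
    intro n k
    by_cases hk : k ∈ E n <;> simp [hk, Real.zero_rpow hq.ne']
  rw [← Summable.tsum_finsetSum fun n _ => hsum _]
  refine Summable.tsum_le_tsum (fun k => ?_) (summable_sum fun n _ => hsum _) (hsum f)
  simp_rw [hind]
  rw [← Finset.indicator_biUnion_apply s E fun i _ j _ hij => hE hij]
  exact Set.indicator_le_self' (fun _ _ => by positivity) k

theorem exists_lp_eq_of_le_norm_lpRestrict (hq : 0 < q.toReal) {E : ℕ → Set ℕ}
    (hE : Pairwise (Function.onFun Disjoint E)) {a : ℕ → ℝ} {K : ℝ} (hK : 0 ≤ K)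
    (f : lp (fun _ : ℕ => ℝ) q) (h : ∀ n, |a n| ≤ K * ‖lpRestrict (E n) f‖) :
    ∃ g : lp (fun _ : ℕ => ℝ) q, ⇑g = a ∧ ‖g‖ ≤ K * ‖f‖ := by
  refine exists_lp_eq_of_sum_rpow_le hq (mul_nonneg hK (lp.norm_nonneg' f)) fun s => ?_
  calc ∑ n ∈ s, ‖a n‖ ^ q.toReal
      ≤ ∑ n ∈ s, K ^ q.toReal * ‖lpRestrict (E n) f‖ ^ q.toReal := by
        gcongr with n
        rw [← Real.mul_rpow hK (lp.norm_nonneg' _)]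
        exact Real.rpow_le_rpow (norm_nonneg _) (h n) hq.le
    _ ≤ (K * ‖f‖) ^ q.toReal := by
        rw [← Finset.mul_sum, Real.mul_rpow hK (lp.norm_nonneg' _)]
        gcongr
        exact sum_norm_lpRestrict_rpow_le hq hE f s

/-- The function `b` assigns each coordinate to one block, so that the blocks do not overlap. -/
theorem exists_lp_eq_mul_of_mul_norm_le (hq : 0 < q.toReal) (b : ℕ → ℕ) {a : ℕ → ℝ}
    {z : ℕ → lp (fun _ : ℕ => ℝ) q} {K : ℝ} (hK : 0 ≤ K) (f : lp (fun _ : ℕ => ℝ) q)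
    (h : ∀ n, |a n| * ‖z n‖ ≤ K * ‖f n‖) :
    ∃ g : lp (fun _ : ℕ => ℝ) q, (⇑g = fun k => a (b k) * z (b k) k) ∧ ‖g‖ ≤ K * ‖f‖ := by
  classical
  refine exists_lp_eq_of_sum_rpow_le hq (mul_nonneg hK (lp.norm_nonneg' f)) fun s => ?_
  have fiber_le : ∀ n, ∑ k ∈ s with b k = n, ‖a (b k) * z (b k) k‖ ^ q.toReal ≤
      (K * ‖f n‖) ^ q.toReal := by
    intro n
    calc ∑ k ∈ s with b k = n, ‖a (b k) * z (b k) k‖ ^ q.toReal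
        = |a n| ^ q.toReal * ∑ k ∈ s with b k = n, ‖z n k‖ ^ q.toReal := by
          rw [Finset.mul_sum]
          refine Finset.sum_congr rfl fun k hk => ?_
          rw [(Finset.mem_filter.1 hk).2, norm_mul, Real.mul_rpow (norm_nonneg _) (norm_nonneg _),
            Real.norm_eq_abs]
      _ ≤ |a n| ^ q.toReal * ‖z n‖ ^ q.toReal := by
          gcongr
          exact lp.sum_rpow_le_norm_rpow hq (z n) _
      _ ≤ (K * ‖f n‖) ^ q.toReal := by
          have hz := lp.norm_nonneg' (z n)
          rw [← Real.mul_rpow (abs_nonneg _) hz]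
          exact Real.rpow_le_rpow (by positivity) (h n) hq.le
  calc ∑ k ∈ s, ‖a (b k) * z (b k) k‖ ^ q.toReal
      = ∑ n ∈ s.image b, ∑ k ∈ s with b k = n, ‖a (b k) * z (b k) k‖ ^ q.toReal :=
        (Finset.sum_fiberwise_of_maps_to (fun _ => Finset.mem_image_of_mem b) _).symm
    _ ≤ ∑ n ∈ s.image b, K ^ q.toReal * ‖f n‖ ^ q.toReal := by
        gcongr with n
        exact (fiber_le n).trans_eq (Real.mul_rpow hK (norm_nonneg _))
    _ ≤ (K * ‖f‖) ^ q.toReal := by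
        rw [← Finset.mul_sum, Real.mul_rpow hK (lp.norm_nonneg' _)]
        gcongr
        exact lp.sum_rpow_le_norm_rpow hq f _

theorem inner_lpRestrict_left (A : Set ℕ) (f g : Seq2) :
    inner ℝ (lpRestrict A f) g = inner ℝ (lpRestrict A f) (lpRestrict A g) := by
  simp_rw [lp.inner_eq_tsum]
  refine tsum_congr fun k => ?_
  by_cases hk : k ∈ A <;> simp [hk]

end lpRestrict

namespace Xpw

theorem pair_snd_apply (x : Xpw p w) (n : ℕ) : x.pair.2 n = w n * seq x n :=
  (show ↥(XpwMod p w) from x).2 n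

theorem seq_injective : Function.Injective (seq : Xpw p w → ℕ → ℝ) := fun x y h =>
  Subtype.ext <| Prod.ext (lp.ext h) <| lp.ext <| funext fun n => by
    change x.pair.2 n = y.pair.2 n
    rw [pair_snd_apply, pair_snd_apply, h]

@[simp]
theorem seq_restrict (E : Set ℕ) (x : Xpw p w) : seq (restrict E x) = E.indicator (seq x) := rfl

theorem restrict_restrict (A B : Set ℕ) (x : Xpw p w) :
    restrict A (restrict B x) = restrict (A ∩ B) x :=
  seq_injective (Set.indicator_indicator A B (seq x))

theorem restrict_eq_self {A : Set ℕ} {x : Xpw p w} (h : Function.support (seq x) ⊆ A) :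
    restrict A x = x :=
  seq_injective (Set.indicator_eq_self.2 h)

theorem nrmP_nonneg (x : Xpw p w) : 0 ≤ nrmP x := lp.norm_nonneg' _

theorem nrm2_nonneg (x : Xpw p w) : 0 ≤ nrm2 x := norm_nonneg _

/-- The basis vector `e_n` of `X_{p,w}`. -/
def single (n : ℕ) : Xpw p w :=
  show ↥(XpwMod p w) from
  ⟨(lp.single (ENNReal.ofReal p) n (1 : ℝ), lp.single 2 n (w n)), fun k => by
    by_cases hk : k = n
    · subst hk
      simp
    · simp [hk]⟩

@[simp]
theorem seq_single (n : ℕ) : seq (single n : Xpw p w) = Pi.single n 1 := rfl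

variable [Fact (1 ≤ ENNReal.ofReal p)]

theorem one_le_exponent : 1 ≤ p := ENNReal.one_le_ofReal.1 Fact.out

theorem toReal_exponent : (ENNReal.ofReal p).toReal = p :=
  ENNReal.toReal_ofReal (zero_le_one.trans one_le_exponent)

theorem toReal_exponent_pos : 0 < (ENNReal.ofReal p).toReal := by
  rw [toReal_exponent]
  exact zero_lt_one.trans_le one_le_exponent

theorem nrmP_le_norm (x : Xpw p w) : nrmP x ≤ ‖x‖ := le_max_left _ _

theorem nrm2_le_norm (x : Xpw p w) : nrm2 x ≤ ‖x‖ := le_max_right _ _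

@[simp]
theorem seq_add (x y : Xpw p w) : seq (x + y) = seq x + seq y := rfl

@[simp]
theorem seq_smul (r : ℝ) (x : Xpw p w) : seq (r • x) = r • seq x := rfl

theorem nrmP_smul (r : ℝ) (x : Xpw p w) : nrmP (r • x) = |r| * nrmP x := norm_smul r x.pair.1

theorem nrm2_smul (r : ℝ) (x : Xpw p w) : nrm2 (r • x) = |r| * nrm2 x := norm_smul r x.pair.2

theorem nrm2_zero : nrm2 (0 : Xpw p w) = 0 := norm_zero

theorem isClosed_XpwMod : IsClosed (XpwMod p w : Set (SeqP p × Seq2)) := by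
  have hset : (XpwMod p w : Set (SeqP p × Seq2)) = ⋂ n, {z | z.2 n = w n * z.1 n} := by
    ext z
    simp only [Set.mem_iInter]
    exact Iff.rfl
  rw [hset]
  refine isClosed_iInter fun n => isClosed_eq ?_ (Continuous.const_mul ?_ _)
  · exact (lp.evalCLM ℝ (fun _ : ℕ => ℝ) 2 n).continuous.comp continuous_snd
  · exact (lp.evalCLM ℝ (fun _ : ℕ => ℝ) (ENNReal.ofReal p) n).continuous.comp continuous_fst

instance : CompleteSpace (Xpw p w) :=
  (isClosed_XpwMod (p := p) (w := w)).completeSpace_coe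

/-- The isometric inclusion of `X_{p,w}` in `ℓ_p ⊕_∞ ℓ_2`, that is `Xpw.pair` as a continuous linear
map. -/
def pairL : Xpw p w →L[ℝ] SeqP p × Seq2 := (XpwMod p w).subtypeL

theorem pairL_apply (x : Xpw p w) : pairL x = x.pair := rfl

/-- The `n`-th coordinate as a continuous linear functional on `X_{p,w}`. -/
def coord (n : ℕ) : Xpw p w →L[ℝ] ℝ :=
  lp.evalCLM ℝ (fun _ : ℕ => ℝ) (ENNReal.ofReal p) n ∘L
    ContinuousLinearMap.fst ℝ (SeqP p) Seq2 ∘L pairL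

@[simp]
theorem coord_apply (n : ℕ) (x : Xpw p w) : coord n x = seq x n := rfl

theorem norm_coord_le (n : ℕ) : ‖(coord n : Xpw p w →L[ℝ] ℝ)‖ ≤ 1 :=
  ContinuousLinearMap.opNorm_le_bound _ zero_le_one fun x => by
    rw [one_mul]
    exact (lp.norm_apply_le_norm (zero_lt_one.trans_le (Fact.out : 1 ≤ ENNReal.ofReal p)).ne'
      x.pair.1 n).trans (nrmP_le_norm x)

theorem seq_sum {ι : Type*} (s : Finset ι) (f : ι → Xpw p w) :
    seq (∑ i ∈ s, f i) = ∑ i ∈ s, seq (f i) := by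
  funext k
  simp_rw [← coord_apply, map_sum, Finset.sum_apply, coord_apply]

theorem seq_sum_smul_single (s : Finset ℕ) (f : ℕ → ℝ) :
    seq (∑ n ∈ s, f n • single n : Xpw p w) = (s : Set ℕ).indicator f := by
  classical
  funext k
  simp [seq_sum, Set.indicator_apply, Pi.single_apply]

theorem hasSum_smul_single (x : Xpw p w) : HasSum (fun n => seq x n • single n) x := by
  have pairL_smul_single : ∀ n, pairL (seq x n • (single n : Xpw p w)) =
      (lp.single _ n (x.pair.1 n), lp.single 2 n (x.pair.2 n)) := by
    intro n
    rw [map_smul, pair_snd_apply, mul_comm, ← smul_eq_mul, lp.single_smul, pairL_apply]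
    refine Prod.ext ?_ rfl
    simpa only [smul_eq_mul, mul_one] using!
      (lp.single_smul (E := fun _ : ℕ => ℝ) (ENNReal.ofReal p) n (seq x n) (1 : ℝ)).symm
  have inducing : Topology.IsInducing (pairL : Xpw p w →L[ℝ] SeqP p × Seq2) := .subtypeVal
  refine (inducing.hasSum_iff _ _).1 ?_
  simpa only [Function.comp_def, pairL_smul_single] using!
    (lp.hasSum_single ENNReal.ofReal_ne_top x.pair.1).prodMk
      (lp.hasSum_single ENNReal.ofNat_ne_top x.pair.2)

theorem eq_of_forall_apply_single {F : Type*} [NormedAddCommGroup F] [NormedSpace ℝ F]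
    {T T' : Xpw p w →L[ℝ] F} (h : ∀ n, T (single n) = T' (single n)) : T = T' :=
  ContinuousLinearMap.ext fun x =>
    ((hasSum_smul_single x).mapL T).unique <| by
      simpa only [map_smul, h] using (hasSum_smul_single x).mapL T'

theorem apply_mem_of_forall_apply_single_mem {F : Type*} [NormedAddCommGroup F] [NormedSpace ℝ F]
    {T : Xpw p w →L[ℝ] F} {X : Submodule ℝ F} (hX : IsClosed (X : Set F))
    (h : ∀ n, T (single n) ∈ X) (x : Xpw p w) : T x ∈ X :=
  hX.mem_of_tendsto ((hasSum_smul_single x).mapL T) <| .of_forall fun s =>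
    X.sum_mem fun n _ => by
      rw [map_smul]
      exact X.smul_mem _ (h n)

theorem tendsto_norm_restrict_Ici (x : Xpw p w) :
    Filter.Tendsto (fun N => ‖restrict (Set.Ici N) x‖) Filter.atTop (nhds 0) := by
  refine (tendsto_iff_norm_sub_tendsto_zero.1
    (hasSum_smul_single x).tendsto_sum_nat).congr fun N => ?_
  rw [norm_sub_rev]
  congr 1
  refine seq_injective (funext fun k => ?_)
  have hk := congr_fun (seq_sum_smul_single (p := p) (w := w) (Finset.range N) (seq x)) k
  rw [← coord_apply, map_sub, coord_apply, coord_apply, hk, seq_restrict,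
    Set.indicator_apply, Set.indicator_apply]
  by_cases h : k < N
  · simp [h]
  · simp [h, not_lt.1 h]

theorem restrict_add_restrict_of_disjoint {A B : Set ℕ} (h : Disjoint A B) (x : Xpw p w) :
    restrict A x + restrict B x = restrict (A ∪ B) x :=
  seq_injective (Set.indicator_union_of_disjoint h (seq x)).symm

theorem exists_seq_eq_indicator {s : Set ℕ} (hs : s.Finite) (a : ℕ → ℝ) :
    ∃ z : Xpw p w, seq z = s.indicator a := by
  lift s to Finset ℕ using hs
  exact ⟨_, seq_sum_smul_single s a⟩

theorem exists_clm_seq_eq {F : Type*} [NormedAddCommGroup F] [NormedSpace ℝ F]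
    (L : F →ₗ[ℝ] ℕ → ℝ) {K : ℝ} (hK : 0 ≤ K)
    (hp : ∀ x, ∃ g : SeqP p, ⇑g = L x ∧ ‖g‖ ≤ K * ‖x‖)
    (h2 : ∀ x, ∃ g : Seq2, (⇑g = fun k => w k * L x k) ∧ ‖g‖ ≤ K * ‖x‖) :
    ∃ T : F →L[ℝ] Xpw p w, ‖T‖ ≤ K ∧ ∀ x, seq (T x) = L x := by
  have lift_apply : ∀ x, ∃ y : Xpw p w, seq y = L x ∧ ‖y‖ ≤ K * ‖x‖ := by
    intro x
    obtain ⟨f, hf, hf_norm⟩ := hp x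
    obtain ⟨g, hg, hg_norm⟩ := h2 x
    let y : XpwMod p w := ⟨(f, g), fun n => by rw [hg, hf]⟩
    exact ⟨y, hf, max_le hf_norm hg_norm⟩
  choose T hT hT_norm using lift_apply
  let Tₗ : F →ₗ[ℝ] Xpw p w :=
    { toFun := T
      map_add' := fun x y => seq_injective (by simp only [seq_add, hT, map_add])
      map_smul' := fun r x => seq_injective (by
        simp only [seq_smul, hT, map_smul, RingHom.id_apply]) }
  exact ⟨Tₗ.mkContinuous K hT_norm, Tₗ.mkContinuous_norm_le hK hT_norm, hT⟩

end Xpw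

section Hoelder

theorem omegaE_finset (p : ℝ) (w : ℕ → ℝ) (s : Finset ℕ) :
    omegaE p w (s : Set ℕ) = ∑ k ∈ s, w k ^ (2 * p / (p - 2)) :=
  s.tsum_subtype fun k => w k ^ (2 * p / (p - 2))

theorem omegaE_nonneg (hw : ∀ n, 0 ≤ w n) (E : Set ℕ) : 0 ≤ omegaE p w E :=
  tsum_nonneg fun n => Real.rpow_nonneg (hw n) _

theorem holderConjugate_div_two (hp : 2 < p) : (p / 2).HolderConjugate (p / (p - 2)) := by
  have : 0 < p - 2 := sub_pos.2 hp
  rw [Real.holderConjugate_iff]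
  refine ⟨by linarith, ?_⟩
  field_simp
  ring

theorem sum_sq_mul_le_of_two_lt (hp : 2 < p) {w : ℕ → ℝ} (hw : ∀ n, 0 ≤ w n) (s : Finset ℕ)
    (a : ℕ → ℝ) :
    ∑ k ∈ s, (w k * a k) ^ 2 ≤
      (∑ k ∈ s, w k ^ (2 * p / (p - 2))) ^ ((p - 2) / p) * (∑ k ∈ s, |a k| ^ p) ^ (2 / p) := by
  have rpow_sq : ∀ (x r : ℝ), |x ^ 2| ^ r = |x| ^ (2 * r) := fun x r => by
    rw [abs_pow, Real.rpow_mul (abs_nonneg x), Real.rpow_two]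
  have := Real.inner_le_Lp_mul_Lq s (fun k => w k ^ 2) (fun k => a k ^ 2)
    (holderConjugate_div_two hp).symm
  simp only [rpow_sq, abs_of_nonneg (hw _), ← mul_pow, one_div_div, mul_div_assoc',
    mul_div_cancel_left₀ p two_ne_zero] at this
  exact this

namespace Xpw

theorem nrm2_restrict_finset_sq (s : Finset ℕ) (x : Xpw p w) :
    nrm2 (restrict (s : Set ℕ) x) ^ 2 = ∑ k ∈ s, (w k * seq x k) ^ 2 := by
  simpa [pair_snd_apply, mul_pow] using!
    norm_lpRestrict_finset_rpow (q := 2) (by norm_num) s x.pair.2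

variable [Fact (1 ≤ ENNReal.ofReal p)]

theorem nrmP_restrict_finset_rpow (s : Finset ℕ) (x : Xpw p w) :
    nrmP (restrict (s : Set ℕ) x) ^ p = ∑ k ∈ s, |seq x k| ^ p := by
  have := norm_lpRestrict_finset_rpow toReal_exponent_pos s x.pair.1
  rwa [toReal_exponent] at this

theorem nrm2_restrict_le_omegaE_rpow_mul (hp : 2 < p) (hw : ∀ n, 0 ≤ w n) {E : Set ℕ}
    (hE : E.Finite) (x : Xpw p w) :
    nrm2 (restrict E x) ≤ omegaE p w E ^ ((p - 2) / (2 * p)) * nrmP (restrict E x) := by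
  lift E to Finset ℕ using hE
  have hp0 : p ≠ 0 := by linarith
  have hω := omegaE_nonneg (p := p) hw E
  refine (sq_le_sq₀ (nrm2_nonneg _) (mul_nonneg (by positivity) (nrmP_nonneg _))).1 ?_
  calc nrm2 (restrict (E : Set ℕ) x) ^ 2
      ≤ omegaE p w E ^ ((p - 2) / p) * (nrmP (restrict (E : Set ℕ) x) ^ p) ^ (2 / p) := by
        rw [nrm2_restrict_finset_sq, nrmP_restrict_finset_rpow, omegaE_finset]
        exact sum_sq_mul_le_of_two_lt hp hw E (seq x)
    _ = (omegaE p w E ^ ((p - 2) / (2 * p)) * nrmP (restrict (E : Set ℕ) x)) ^ 2 := by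
        rw [mul_pow, ← Real.rpow_mul (nrmP_nonneg _), ← Real.rpow_mul_natCast hω,
          mul_div_cancel₀ _ hp0, Real.rpow_two]
        congr 2
        push_cast
        field_simp

/-- On a finite set, the multiples of `w ^ (2 / (p - 2))` attain equality in
`nrm2_restrict_le_omegaE_rpow_mul`. -/
theorem exists_nrmP_rpow_eq_nrm2_sq_eq_omegaE (hp : 2 < p) (hw : ∀ n, 0 < w n) {E : Set ℕ}
    (hE : E.Finite) :
    ∃ z : Xpw p w, Function.support (seq z) ⊆ E ∧ nrmP z ^ p = omegaE p w E ∧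
      nrm2 z ^ 2 = omegaE p w E := by
  have hp2 : 0 < p - 2 := sub_pos.2 hp
  have hexp : 2 * p / (p - 2) = (1 + 2 / (p - 2)) * (2 : ℕ) := by
    push_cast
    field_simp
    ring
  lift E to Finset ℕ using hE
  obtain ⟨z, hz⟩ := exists_seq_eq_indicator (p := p) (w := w) E.finite_toSet
    fun k => w k ^ (2 / (p - 2))
  have support_z : Function.support (seq z) ⊆ E := hz ▸ Set.support_indicator_subset
  have seq_z : ∀ k ∈ E, seq z k = w k ^ (2 / (p - 2)) := fun k hk => by
    rw [hz, Set.indicator_of_mem (Finset.mem_coe.2 hk)]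
  refine ⟨z, support_z, ?_, ?_⟩
  · rw [← restrict_eq_self support_z, nrmP_restrict_finset_rpow, omegaE_finset]
    refine Finset.sum_congr rfl fun k hk => ?_
    rw [seq_z k hk, abs_of_nonneg (Real.rpow_nonneg (hw k).le _), ← Real.rpow_mul (hw k).le,
      div_mul_eq_mul_div]
  · rw [← restrict_eq_self support_z, nrm2_restrict_finset_sq, omegaE_finset]
    refine Finset.sum_congr rfl fun k hk => ?_
    rw [seq_z k hk, hexp, Real.rpow_mul_natCast (hw k).le,
      Real.rpow_one_add' (hw k).le (by positivity)]

theorem exists_nrmP_eq_one_nrm2_eq_omegaE_rpow (hp : 2 < p) (hw : ∀ n, 0 < w n) {E : Set ℕ}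
    (hE : E.Finite) (hω : 0 < omegaE p w E) :
    ∃ z : Xpw p w, Function.support (seq z) ⊆ E ∧ nrmP z = 1 ∧
      nrm2 z = omegaE p w E ^ ((p - 2) / (2 * p)) := by
  obtain ⟨z, support_z, hzp, hz2⟩ := exists_nrmP_rpow_eq_nrm2_sq_eq_omegaE hp hw hE
  set ω := omegaE p w E
  have hp0 : p ≠ 0 := by linarith
  have nrmP_z : nrmP z = ω ^ p⁻¹ := (Real.eq_rpow_inv (nrmP_nonneg z) hω.le hp0).2 hzp
  have nrm2_z : nrm2 z = ω ^ (2⁻¹ : ℝ) :=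
    (Real.eq_rpow_inv (nrm2_nonneg z) hω.le two_ne_zero).2 (by rw [Real.rpow_two, hz2])
  refine ⟨ω ^ (-p⁻¹) • z, (Function.support_const_smul_subset _ _).trans support_z, ?_, ?_⟩
  · rw [nrmP_smul, nrmP_z, abs_of_pos (by positivity), ← Real.rpow_add hω, neg_add_cancel,
      Real.rpow_zero]
  · rw [nrm2_smul, nrm2_z, abs_of_pos (by positivity), ← Real.rpow_add hω]
    congr 1
    field_simp
    ring

end Xpw

end Hoelder

section Blocks

theorem exists_eq_of_mem_of_pairwise_disjoint {α ι : Type*} [Nonempty ι] {E : ι → Set α}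
    (hE : Pairwise (Function.onFun Disjoint E)) : ∃ b : α → ι, ∀ i, ∀ k ∈ E i, b k = i := by
  have hb : ∀ k, ∃ j, ∀ i, k ∈ E i → j = i := by
    intro k
    by_cases h : ∃ j, k ∈ E j
    · obtain ⟨j, hj⟩ := h
      exact ⟨j, fun i hi => hE.eq (Set.not_disjoint_iff.2 ⟨k, hj, hi⟩)⟩
    · exact ⟨Classical.arbitrary ι, fun i hi => absurd ⟨i, hi⟩ h⟩
  choose b hb using hb
  exact ⟨b, fun i k hk => hb k i hk⟩

namespace Xpw

variable [Fact (1 ≤ ENNReal.ofReal p)]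

/-- The coefficient of the orthogonal projection onto `x_{|A}` in the weighted `ℓ_2`-norm, as a
functional on `X_{p,w}`; it is `0` if `x_{|A} = 0`. -/
def projCoeff (A : Set ℕ) (x : Xpw p w) : Xpw p w →L[ℝ] ℝ :=
  (nrm2 (restrict A x) ^ 2)⁻¹ •
    (innerSL ℝ (restrict A x).pair.2 ∘L ContinuousLinearMap.snd ℝ (SeqP p) Seq2 ∘L pairL)

theorem projCoeff_apply (A : Set ℕ) (x y : Xpw p w) : projCoeff A x y =
    (nrm2 (restrict A x) ^ 2)⁻¹ * inner ℝ (restrict A x).pair.2 (restrict A y).pair.2 :=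
  congrArg _ (inner_lpRestrict_left A x.pair.2 y.pair.2)

theorem projCoeff_self {A : Set ℕ} {x : Xpw p w} (h : nrm2 (restrict A x) ≠ 0) :
    projCoeff A x x = 1 := by
  rw [projCoeff_apply, real_inner_self_eq_norm_sq]
  exact inv_mul_cancel₀ (pow_ne_zero 2 h)

theorem abs_projCoeff_le (A : Set ℕ) (x y : Xpw p w) :
    |projCoeff A x y| ≤ nrm2 (restrict A y) / nrm2 (restrict A x) := by
  rw [projCoeff_apply, abs_mul, abs_of_nonneg (by positivity)]
  calc (nrm2 (restrict A x) ^ 2)⁻¹ * |inner ℝ (restrict A x).pair.2 (restrict A y).pair.2|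
      ≤ (nrm2 (restrict A x) ^ 2)⁻¹ * (nrm2 (restrict A x) * nrm2 (restrict A y)) := by
        gcongr
        exact abs_real_inner_le_norm _ _
    _ = nrm2 (restrict A y) / nrm2 (restrict A x) := by
        rcases eq_or_ne (nrm2 (restrict A x)) 0 with h | h
        · simp [h]
        · field_simp

theorem projCoeff_eq_zero_of_disjoint {A : Set ℕ} {x y : Xpw p w}
    (h : Disjoint A (Function.support (seq y))) : projCoeff A x y = 0 := by
  have restrict_eq_zero : restrict A y = 0 :=
    seq_injective (Set.indicator_eq_zero'.2 h.symm)
  have := abs_projCoeff_le A x y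
  rw [restrict_eq_zero] at this
  simpa [nrm2_zero] using this

end Xpw

variable {v : ℕ → ℝ} {z : ℕ → Xpw p w} {E : ℕ → Set ℕ} {K : ℝ}

/-- Disjoint blocks `z n` in `X_{p,w}` with cores `E n` that span a complemented copy of `X_{p,v}`:
up to the constant `K`, the vector `z n` has the `ℓ_p`-norm of `e_n` from above and its weighted
`ℓ_2`-norm `v n`, and `ω(E n)` is small enough for Hölder's inequality on `E n` to bound the
biorthogonal functionals carried by the cores. -/
structure IsBlockSeq (K : ℝ) (v : ℕ → ℝ) (z : ℕ → Xpw p w) (E : ℕ → Set ℕ) : Prop where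
  disjoint : Pairwise (Function.onFun Disjoint fun n => Function.support (seq (z n)) ∪ E n)
  finite : ∀ n, (E n).Finite
  weight_pos : ∀ n, 0 < v n
  nrmP_le : ∀ n, nrmP (z n) ≤ K
  nrm2_le : ∀ n, nrm2 (z n) ≤ K * v n
  weight_le : ∀ n, v n ≤ K * nrm2 (restrict (E n) (z n))
  omegaE_rpow_le : ∀ n, omegaE p w (E n) ^ ((p - 2) / (2 * p)) ≤ K * nrm2 (restrict (E n) (z n))

namespace IsBlockSeq

theorem nrm2_restrict_pos (hz : IsBlockSeq K v z E) (n : ℕ) : 0 < nrm2 (restrict (E n) (z n)) := by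
  refine (Xpw.nrm2_nonneg _).lt_of_ne' fun h => ?_
  have := (hz.weight_pos n).trans_le (hz.weight_le n)
  rw [h, mul_zero] at this
  exact this.false

theorem const_pos (hz : IsBlockSeq K v z E) : 0 < K :=
  pos_of_mul_pos_left ((hz.weight_pos 0).trans_le (hz.weight_le 0)) (Xpw.nrm2_nonneg _)

variable [Fact (1 ≤ ENNReal.ofReal p)]

theorem exists_synthesis (hz : IsBlockSeq K v z E) :
    ∃ T : Xpw p v →L[ℝ] Xpw p w, ∀ n, T (Xpw.single n) = z n := by
  obtain ⟨b, hb⟩ := exists_eq_of_mem_of_pairwise_disjoint hz.disjoint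
  let L : Xpw p v →ₗ[ℝ] ℕ → ℝ :=
    { toFun := fun x k => seq x (b k) * seq (z (b k)) k
      map_add' := fun x y => funext fun k => add_mul _ _ _
      map_smul' := fun r x => funext fun k => mul_assoc _ _ _ }
  have exists_lp : ∀ x, ∃ g : SeqP p, ⇑g = L x ∧ ‖g‖ ≤ K * ‖x‖ := by
    intro x
    obtain ⟨g, hg, hg_norm⟩ := exists_lp_eq_mul_of_mul_norm_le Xpw.toReal_exponent_pos b
      (a := seq x) (z := fun n => (z n).pair.1) hz.const_pos.le x.pair.1 fun n => by
        rw [mul_comm]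
        exact mul_le_mul_of_nonneg_right (hz.nrmP_le n) (abs_nonneg _)
    exact ⟨g, hg, hg_norm.trans (mul_le_mul_of_nonneg_left x.nrmP_le_norm hz.const_pos.le)⟩
  have exists_l2 : ∀ x, ∃ g : Seq2, (⇑g = fun k => w k * L x k) ∧ ‖g‖ ≤ K * ‖x‖ := by
    intro x
    obtain ⟨g, hg, hg_norm⟩ := exists_lp_eq_mul_of_mul_norm_le (q := 2) (by norm_num) b
      (a := seq x) (z := fun n => (z n).pair.2) hz.const_pos.le x.pair.2 fun n => by
        rw [Xpw.pair_snd_apply, norm_mul, Real.norm_of_nonneg (hz.weight_pos n).le, ← mul_assoc,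
          mul_comm]
        exact mul_le_mul_of_nonneg_right (hz.nrm2_le n) (abs_nonneg _)
    refine ⟨g, ?_, hg_norm.trans (mul_le_mul_of_nonneg_left x.nrm2_le_norm hz.const_pos.le)⟩
    rw [hg]
    funext k
    rw [Xpw.pair_snd_apply]
    exact mul_left_comm _ _ _
  obtain ⟨T, -, hT⟩ := Xpw.exists_clm_seq_eq L hz.const_pos.le exists_lp exists_l2
  refine ⟨T, fun n => Xpw.seq_injective (funext fun k => ?_)⟩
  rw [hT]
  change seq (Xpw.single n) (b k) * seq (z (b k)) k = seq (z n) k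
  rw [Xpw.seq_single]
  by_cases hk : b k = n
  · rw [hk, Pi.single_eq_same, one_mul]
  · rw [Pi.single_eq_of_ne hk, zero_mul]
    exact (Function.notMem_support.1 fun hmem => hk (hb n k (Or.inl hmem))).symm

theorem abs_projCoeff_le (hp : 2 < p) (hw : ∀ n, 0 ≤ w n) (hz : IsBlockSeq K v z E) (n : ℕ)
    (y : Xpw p w) : |Xpw.projCoeff (E n) (z n) y| ≤ K * nrmP (restrict (E n) y) := by
  refine (Xpw.abs_projCoeff_le _ _ _).trans ((div_le_iff₀ (hz.nrm2_restrict_pos n)).2 ?_)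
  rw [mul_right_comm]
  exact (Xpw.nrm2_restrict_le_omegaE_rpow_mul hp hw (hz.finite n) y).trans
    (mul_le_mul_of_nonneg_right (hz.omegaE_rpow_le n) (Xpw.nrmP_nonneg _))

theorem abs_weight_mul_projCoeff_le (hz : IsBlockSeq K v z E) (n : ℕ) (y : Xpw p w) :
    |v n * Xpw.projCoeff (E n) (z n) y| ≤ K * nrm2 (restrict (E n) y) := by
  have hρ := hz.nrm2_restrict_pos n
  rw [abs_mul, abs_of_pos (hz.weight_pos n)]
  calc v n * |Xpw.projCoeff (E n) (z n) y|
      ≤ K * nrm2 (restrict (E n) (z n)) *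
        (nrm2 (restrict (E n) y) / nrm2 (restrict (E n) (z n))) :=
        mul_le_mul (hz.weight_le n) (Xpw.abs_projCoeff_le _ _ _) (abs_nonneg _)
          (mul_nonneg hz.const_pos.le hρ.le)
    _ = K * nrm2 (restrict (E n) y) := by rw [mul_assoc, mul_div_cancel₀ _ hρ.ne']

theorem exists_analysis (hp : 2 < p) (hw : ∀ n, 0 ≤ w n) (hz : IsBlockSeq K v z E) :
    ∃ S : Xpw p w →L[ℝ] Xpw p v, ‖S‖ ≤ K ∧ ∀ n, S (z n) = Xpw.single n := by
  have core_disjoint : Pairwise (Function.onFun Disjoint E) := fun m n hmn =>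
    (hz.disjoint hmn).mono Set.subset_union_right Set.subset_union_right
  let L : Xpw p w →ₗ[ℝ] ℕ → ℝ := LinearMap.pi fun n => (Xpw.projCoeff (E n) (z n)).toLinearMap
  have exists_lp : ∀ y, ∃ g : SeqP p, ⇑g = L y ∧ ‖g‖ ≤ K * ‖y‖ := by
    intro y
    obtain ⟨g, hg, hg_norm⟩ := exists_lp_eq_of_le_norm_lpRestrict Xpw.toReal_exponent_pos
      core_disjoint hz.const_pos.le y.pair.1 (hz.abs_projCoeff_le hp hw · y)
    exact ⟨g, hg, hg_norm.trans (mul_le_mul_of_nonneg_left y.nrmP_le_norm hz.const_pos.le)⟩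
  have exists_l2 : ∀ y, ∃ g : Seq2, (⇑g = fun n => v n * L y n) ∧ ‖g‖ ≤ K * ‖y‖ := by
    intro y
    obtain ⟨g, hg, hg_norm⟩ := exists_lp_eq_of_le_norm_lpRestrict (q := 2) (by norm_num)
      core_disjoint hz.const_pos.le y.pair.2 (hz.abs_weight_mul_projCoeff_le · y)
    exact ⟨g, hg, hg_norm.trans (mul_le_mul_of_nonneg_left y.nrm2_le_norm hz.const_pos.le)⟩
  obtain ⟨S, hS_norm, hS⟩ := Xpw.exists_clm_seq_eq L hz.const_pos.le exists_lp exists_l2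
  refine ⟨S, hS_norm, fun m => Xpw.seq_injective ?_⟩
  rw [hS, Xpw.seq_single]
  funext n
  change Xpw.projCoeff (E n) (z n) (z m) = _
  rcases eq_or_ne n m with rfl | hnm
  · rw [Xpw.projCoeff_self (hz.nrm2_restrict_pos n).ne', Pi.single_eq_same]
  · rw [Pi.single_eq_of_ne hnm]
    exact Xpw.projCoeff_eq_zero_of_disjoint
      ((hz.disjoint hnm).mono Set.subset_union_right Set.subset_union_left)

theorem exists_leftInverse (hp : 2 < p) (hw : ∀ n, 0 ≤ w n) (hz : IsBlockSeq K v z E) :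
    ∃ (T : Xpw p v →L[ℝ] Xpw p w) (S : Xpw p w →L[ℝ] Xpw p v),
      (∀ n, T (Xpw.single n) = z n) ∧ ‖S‖ ≤ K ∧ S ∘L T = ContinuousLinearMap.id ℝ _ := by
  obtain ⟨T, hT⟩ := hz.exists_synthesis
  obtain ⟨S, hS_norm, hS⟩ := hz.exists_analysis hp hw
  exact ⟨T, S, hT, hS_norm, Xpw.eq_of_forall_apply_single fun n => by
    rw [ContinuousLinearMap.comp_apply, hT, hS, ContinuousLinearMap.id_apply]⟩

end IsBlockSeq

end Blocks

section Perturbation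

theorem hasLeftInverse_add_of_norm_mul_norm_lt_one {𝕜 F G : Type*} [NontriviallyNormedField 𝕜]
    [NormedAddCommGroup F] [NormedSpace 𝕜 F] [CompleteSpace F] [NormedAddCommGroup G]
    [NormedSpace 𝕜 G] {T R : F →L[𝕜] G} {S : G →L[𝕜] F} (hST : S ∘L T = ContinuousLinearMap.id 𝕜 F)
    (h : ‖S‖ * ‖R‖ < 1) : (T + R).HasLeftInverse := by
  have unit : IsUnit (1 + S ∘L R) := by
    rw [← sub_neg_eq_add]
    refine isUnit_one_sub_of_norm_lt_one ?_
    rw [norm_neg]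
    exact (ContinuousLinearMap.opNorm_comp_le S R).trans_lt h
  obtain ⟨u, hu⟩ := unit.exists_left_inv
  refine ⟨u ∘L S, fun x => ?_⟩
  calc u (S ((T + R) x)) = (u * (S ∘L T + S ∘L R)) x := by
        rw [← ContinuousLinearMap.comp_add]
        rfl
    _ = x := by
        rw [hST, ← ContinuousLinearMap.one_def, hu, one_apply_eq_self]

variable [Fact (1 ≤ ENNReal.ofReal p)]

theorem Xpw.exists_clm_apply_single_eq {F : Type*} [NormedAddCommGroup F] [NormedSpace ℝ F]
    [CompleteSpace F] {r : ℕ → F} {θ : ℕ → ℝ} {Θ : ℝ} (hθ : HasSum θ Θ) (hr : ∀ n, ‖r n‖ ≤ θ n) :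
    ∃ R : Xpw p w →L[ℝ] F, ‖R‖ ≤ Θ ∧ ∀ n, R (Xpw.single n) = r n := by
  let U : ℕ → Xpw p w →L[ℝ] F := fun n => (Xpw.coord n).smulRight (r n)
  have norm_U_le : ∀ n, ‖U n‖ ≤ θ n := by
    intro n
    rw [ContinuousLinearMap.norm_smulRight_apply]
    exact (mul_le_of_le_one_left (norm_nonneg _) (Xpw.norm_coord_le n)).trans (hr n)
  have hasSum_U : HasSum U (∑' n, U n) := (hθ.summable.of_norm_bounded norm_U_le).hasSum
  refine ⟨∑' n, U n, tsum_of_norm_bounded hθ norm_U_le, fun m => ?_⟩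
  refine (hasSum_U.mapL (ContinuousLinearMap.apply ℝ F (Xpw.single m))).unique ?_
  have := hasSum_single (f := fun n => U n (Xpw.single m)) m fun n hn => by
    simp [U, Pi.single_eq_of_ne hn]
  simpa [U] using! this

theorem IsBlockSeq.exists_hasLeftInverse_of_norm_sub_le (hp : 2 < p) (hw : ∀ n, 0 ≤ w n)
    {v : ℕ → ℝ} {z y : ℕ → Xpw p w} {E : ℕ → Set ℕ} {K : ℝ} (hz : IsBlockSeq K v z E)
    (hy : ∀ n, ‖y n - z n‖ ≤ (2 * K)⁻¹ / 2 / 2 ^ n) :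
    ∃ T : Xpw p v →L[ℝ] Xpw p w, T.HasLeftInverse ∧ ∀ n, T (Xpw.single n) = y n := by
  obtain ⟨T, S, hT, hS, hST⟩ := hz.exists_leftInverse hp hw
  obtain ⟨R, hR_norm, hR⟩ := Xpw.exists_clm_apply_single_eq (p := p) (w := v)
    (hasSum_geometric_two' (2 * K)⁻¹) hy
  have hK := hz.const_pos
  refine ⟨T + R, hasLeftInverse_add_of_norm_mul_norm_lt_one hST ?_, fun n => ?_⟩
  · calc ‖S‖ * ‖R‖ ≤ K * (2 * K)⁻¹ := by gcongr
      _ < 1 := by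
        field_simp
        norm_num
  · rw [add_apply, hT, hR, add_sub_cancel]

end Perturbation

section Grouping

theorem exists_subset_sum_mem_Icc {ι : Type*} {f : ι → ℝ} {t : ℝ} (ht : 0 ≤ t) {s : Finset ι}
    (hf : ∀ i ∈ s, f i ≤ t) (hs : t ≤ ∑ i ∈ s, f i) :
    ∃ u ⊆ s, ∑ i ∈ u, f i ∈ Set.Icc t (2 * t) := by
  classical
  induction s using Finset.induction_on with
  | empty => exact ⟨∅, subset_rfl, hs, by simpa using ht⟩
  | insert a s ha ih =>
    by_cases hlt : t ≤ ∑ i ∈ s, f i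
    · obtain ⟨u, hu, hmem⟩ := ih (fun i hi => hf i (Finset.mem_insert_of_mem hi)) hlt
      exact ⟨u, hu.trans (Finset.subset_insert a s), hmem⟩
    · refine ⟨_, subset_rfl, hs, ?_⟩
      rw [Finset.sum_insert ha]
      linarith [hf a (Finset.mem_insert_self a s)]

theorem exists_finset_subset_sum_mem_Icc {ι : Type*} {f : ι → ℝ} {A : Set ι} {η t : ℝ}
    (hη : 0 < η) (ht : 0 ≤ t) (hA : A.Infinite) (hf : ∀ i ∈ A, f i ∈ Set.Icc η t) :
    ∃ u : Finset ι, ↑u ⊆ A ∧ ∑ i ∈ u, f i ∈ Set.Icc t (2 * t) := by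
  obtain ⟨N, hN⟩ := exists_nat_ge (t / η)
  obtain ⟨s, hsA, hs⟩ := hA.exists_subset_card_eq N
  have le_sum : t ≤ ∑ i ∈ s, f i :=
    calc t ≤ s.card • η := by
          rw [hs, nsmul_eq_mul]
          exact (div_le_iff₀ hη).1 hN
      _ ≤ ∑ i ∈ s, f i := s.card_nsmul_le_sum f η fun i hi => (hf i (hsA hi)).1
  obtain ⟨u, hus, hu⟩ := exists_subset_sum_mem_Icc ht (fun i hi => (hf i (hsA hi)).2) le_sum
  exact ⟨u, (Finset.coe_subset.2 hus).trans hsA, hu⟩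

theorem exists_finite_omegaE_rpow_mem_Icc (hp : 2 < p) {v : ℕ → ℝ} {A : Set ℕ} {η s : ℝ}
    (hη : 0 < η) (hs : 0 ≤ s) (hA : A.Infinite) (hv : ∀ k ∈ A, v k ∈ Set.Icc η s) :
    ∃ G ⊆ A, G.Finite ∧ omegaE p v G ^ ((p - 2) / (2 * p)) ∈ Set.Icc s (2 * s) := by
  have hp2 : 0 < p - 2 := sub_pos.2 hp
  have hα : 0 < 2 * p / (p - 2) := div_pos (by linarith) hp2
  have hβ : (p - 2) / (2 * p) = (2 * p / (p - 2))⁻¹ := (inv_div _ _).symm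
  obtain ⟨G, hGA, hG⟩ := exists_finset_subset_sum_mem_Icc (f := fun k => v k ^ (2 * p / (p - 2)))
    (Real.rpow_pos_of_pos hη _) (Real.rpow_nonneg hs (2 * p / (p - 2))) hA fun k hk =>
      ⟨Real.rpow_le_rpow hη.le (hv k hk).1 hα.le,
        Real.rpow_le_rpow (hη.le.trans (hv k hk).1) (hv k hk).2 hα.le⟩
  rw [← omegaE_finset] at hG
  have hω : 0 ≤ omegaE p v G := (Real.rpow_nonneg hs _).trans hG.1
  refine ⟨G, hGA, G.finite_toSet, ?_, ?_⟩
  · rw [hβ]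
    exact (Real.le_rpow_inv_iff_of_pos hs hω hα).2 hG.1
  · calc omegaE p v G ^ ((p - 2) / (2 * p))
        ≤ (2 * s ^ (2 * p / (p - 2))) ^ ((p - 2) / (2 * p)) :=
          Real.rpow_le_rpow hω hG.2 (by positivity)
      _ = 2 ^ ((p - 2) / (2 * p)) * s := by
          rw [Real.mul_rpow zero_le_two (Real.rpow_nonneg hs _), hβ, Real.rpow_rpow_inv hs hα.ne']
      _ ≤ 2 * s := by
          gcongr
          refine Real.rpow_le_self_of_one_le one_le_two ?_
          rw [div_le_one (by positivity)]
          linarith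

variable [Fact (1 ≤ ENNReal.ofReal p)]

theorem exists_isBlockSeq_of_omegaE_rpow_mem_Icc (hp : 2 < p) {v : ℕ → ℝ} (hw : ∀ n, 0 < w n)
    (hv : ∀ k, 0 < v k) {G : ℕ → Set ℕ} (hG : Pairwise (Function.onFun Disjoint G))
    (hfin : ∀ n, (G n).Finite)
    (hω : ∀ n, omegaE p v (G n) ^ ((p - 2) / (2 * p)) ∈ Set.Icc (w n) (2 * w n)) :
    ∃ z : ℕ → Xpw p v, IsBlockSeq 2 w z G := by
  have hβ : (p - 2) / (2 * p) ≠ 0 := (div_pos (sub_pos.2 hp) (by linarith)).ne'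
  have omegaE_pos : ∀ n, 0 < omegaE p v (G n) := fun n =>
    (omegaE_nonneg (fun k => (hv k).le) _).lt_of_ne' fun h => by
      have := (hw n).trans_le (hω n).1
      rw [h, Real.zero_rpow hβ] at this
      exact this.false
  choose z support_z nrmP_z nrm2_z using fun n =>
    Xpw.exists_nrmP_eq_one_nrm2_eq_omegaE_rpow hp hv (hfin n) (omegaE_pos n)
  have ω_le : ∀ n, omegaE p v (G n) ^ ((p - 2) / (2 * p)) ≤
      2 * nrm2 (restrict (G n) (z n)) := fun n => by
    rw [Xpw.restrict_eq_self (support_z n), ← nrm2_z]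
    linarith [Xpw.nrm2_nonneg (z n)]
  exact ⟨z,
    { disjoint := fun m n hmn => (hG hmn).mono (Set.union_subset (support_z m) subset_rfl)
        (Set.union_subset (support_z n) subset_rfl)
      finite := hfin
      weight_pos := hw
      nrmP_le := fun n => (nrmP_z n).trans_le one_le_two
      nrm2_le := fun n => (nrm2_z n).trans_le (hω n).2
      weight_le := fun n => (hω n).1.trans (ω_le n)
      omegaE_rpow_le := ω_le }⟩

theorem exists_hasLeftInverse_of_weight_mem_Icc (hp : 2 < p) {v η : ℕ → ℝ} (hw : ∀ n, 0 < w n)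
    (hη : ∀ n, 0 < η n) {b : ℕ → ℕ} (hb : ∀ n, (b ⁻¹' {n}).Infinite)
    (hv : ∀ k, v k ∈ Set.Icc (η (b k)) (w (b k))) :
    ∃ J : Xpw p w →L[ℝ] Xpw p v, J.HasLeftInverse := by
  have hv_pos : ∀ k, 0 < v k := fun k => (hη _).trans_le (hv k).1
  choose G hGb hfin hω using fun n =>
    exists_finite_omegaE_rpow_mem_Icc hp (hη n) (hw n).le (hb n) fun k (hk : b k = n) => hk ▸ hv k
  obtain ⟨z, hz⟩ := exists_isBlockSeq_of_omegaE_rpow_mem_Icc hp hw hv_pos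
    (fun m n hmn => (pairwise_disjoint_fiber b hmn).mono (hGb m) (hGb n)) hfin hω
  obtain ⟨J, S, -, -, hSJ⟩ := hz.exists_leftInverse hp fun k => (hv_pos k).le
  exact ⟨J, S, DFunLike.congr_fun hSJ⟩

end Grouping

section GlidingHump

open Filter

theorem exists_strictMono_of_eventually_atTop {P : ℕ → ℕ → Prop} {R : ℕ → ℕ → ℕ → Prop}
    (hP : ∀ k, ∀ᶠ N in atTop, P k N) (hR : ∀ k N, P k N → ∀ᶠ N' in atTop, R k N N') :
    ∃ N : ℕ → ℕ, StrictMono N ∧ ∀ k, R k (N k) (N (k + 1)) := by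
  have step : ∀ k N, ∃ N', P k N → P (k + 1) N' ∧ N < N' ∧ R k N N' := by
    intro k N
    by_cases h : P k N
    · obtain ⟨N', hN'⟩ := ((hP (k + 1)).and ((eventually_gt_atTop N).and (hR k N h))).exists
      exact ⟨N', fun _ => hN'⟩
    · exact ⟨0, fun h' => absurd h' h⟩
  choose next hnext using step
  obtain ⟨N₀, hN₀⟩ := (hP 0).exists
  let N : ℕ → ℕ := fun k => Nat.rec N₀ next k
  have hN : ∀ k, P k (N k) := by
    intro k
    induction k with
    | zero => exact hN₀
    | succ k ih => exact (hnext k (N k) ih).1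
  exact ⟨N, strictMono_nat_of_lt_succ fun k => (hnext k (N k) (hN k)).2.1,
    fun k => (hnext k (N k) (hN k)).2.2⟩

variable [Fact (1 ≤ ENNReal.ofReal p)]

theorem Xpw.eventually_norm_restrict_compl_Ico_le {x : Xpw p w} {N : ℕ} {ε : ℝ} (hε : 0 < ε)
    (hx : ‖restrict (Set.Iio N) x‖ ≤ ε) :
    ∀ᶠ N' in atTop, ‖restrict (Set.Ico N N')ᶜ x‖ ≤ ε + ε := by
  filter_upwards [eventually_ge_atTop N,
    (tendsto_norm_restrict_Ici x).eventually_le_const hε] with N' hNN' htail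
  have compl_eq : (Set.Ico N N')ᶜ = Set.Iio N ∪ Set.Ici N' := by
    ext k
    simp only [Set.mem_compl_iff, Set.mem_Ico, Set.mem_union, Set.mem_Iio, Set.mem_Ici]
    omega
  have disjoint : Disjoint (Set.Iio N) (Set.Ici N') :=
    (Set.Iio_disjoint_Ici le_rfl).mono_left (Set.Iio_subset_Iio hNN')
  rw [compl_eq, ← restrict_add_restrict_of_disjoint disjoint]
  exact norm_add_le_of_le hx htail

theorem Xpw.exists_gliding_hump {Q : ℕ → Xpw p w → Set ℕ → Prop} {θ : ℕ → ℝ} (hθ : ∀ k, 0 < θ k)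
    (hfin : ∀ k x E, Q k x E → E.Finite)
    (h : ∀ k, ∀ ε > 0, ∀ᶠ N in atTop, ∃ x E, Q k x E ∧ E ⊆ Set.Ici N ∧
      ‖restrict (Set.Iio N) x‖ ≤ ε) :
    ∃ (W : ℕ → Set ℕ) (y : ℕ → Xpw p w) (F : ℕ → Set ℕ), Pairwise (Function.onFun Disjoint W) ∧
      ∀ k, Q k (y k) (F k) ∧ F k ⊆ W k ∧ ‖restrict (W k)ᶜ (y k)‖ ≤ θ k := by
  obtain ⟨N, hN, hR⟩ := exists_strictMono_of_eventually_atTop (fun k => h k _ (half_pos (hθ k)))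
    (R := fun k N N' => ∃ x E, Q k x E ∧ E ⊆ Set.Ico N N' ∧ ‖restrict (Set.Ico N N')ᶜ x‖ ≤ θ k)
    fun k N ⟨x, E, hQ, hEN, hx⟩ => by
      obtain ⟨B, hB⟩ := (hfin k x E hQ).bddAbove
      filter_upwards [eventually_norm_restrict_compl_Ico_le (half_pos (hθ k)) hx,
        eventually_gt_atTop B] with N' hx' hBN'
      exact ⟨x, E, hQ, fun i hi => ⟨hEN hi, (hB hi).trans_lt hBN'⟩, by rwa [add_halves] at hx'⟩
  choose y F hF using hR
  exact ⟨_, y, F, hN.monotone.pairwise_disjoint_on_Ico_succ, hF⟩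

end GlidingHump

section Humps

variable [Fact (1 ≤ ENNReal.ofReal p)] {X : Submodule ℝ (Xpw p w)} {c δ : ℝ}

/-- The unit vectors `x ∈ X` which satisfy the conditions (b) and (c) with respect to the finite
set `E`, where `ε'` and `ε` are the bounds in (c). -/
structure IsHump (X : Submodule ℝ (Xpw p w)) (c δ ε ε' : ℝ) (x : Xpw p w) (E : Set ℕ) : Prop where
  mem : x ∈ X
  norm_eq_one : ‖x‖ = 1
  finite : E.Finite
  mul_nrm2_le : δ * nrm2 x ≤ nrm2 (restrict E x)
  nrm2_restrict_le : c * nrm2 (restrict E x) ≤ ε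
  omegaE_rpow_le : omegaE p w E ^ ((p - 2) / (2 * p)) ≤ c * nrm2 (restrict E x)
  le_omegaE_rpow : ε' ≤ omegaE p w E ^ ((p - 2) / (2 * p))

theorem IsHump.nrm2_restrict_mem_Icc {ε ε' : ℝ} {x : Xpw p w} {E : Set ℕ} (hc : 0 < c)
    (hx : IsHump X c δ ε ε' x E) : nrm2 (restrict E x) ∈ Set.Icc (ε' / c) (ε / c) :=
  ⟨(div_le_iff₀' hc).2 (hx.le_omegaE_rpow.trans hx.omegaE_rpow_le),
    (le_div_iff₀' hc).2 hx.nrm2_restrict_le⟩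

theorem isBlockSeq_restrict_of_isHump {K : ℝ} (hc : 0 < c) (hδ : 0 < δ) (hK : 1 ≤ K)
    (hcK : c ≤ K) (hδK : δ⁻¹ ≤ K) {ε ε' : ℕ → ℝ} (hε' : ∀ k, 0 < ε' k) {y : ℕ → Xpw p w}
    {E W : ℕ → Set ℕ} (hW : Pairwise (Function.onFun Disjoint W)) (hEW : ∀ k, E k ⊆ W k)
    (hy : ∀ k, IsHump X c δ (ε k) (ε' k) (y k) (E k)) :
    IsBlockSeq K (fun k => nrm2 (restrict (E k) (y k))) (fun k => restrict (W k) (y k)) E := by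
  have core_eq : ∀ k, restrict (E k) (restrict (W k) (y k)) = restrict (E k) (y k) := fun k => by
    rw [Xpw.restrict_restrict, Set.inter_eq_left.2 (hEW k)]
  have support_subset : ∀ k, Function.support (seq (restrict (W k) (y k))) ∪ E k ⊆ W k := fun k =>
    Set.union_subset Set.support_indicator_subset (hEW k)
  refine
    { disjoint := fun m n hmn => (hW hmn).mono (support_subset m) (support_subset n)
      finite := fun k => (hy k).finite
      weight_pos := fun k => (div_pos (hε' k) hc).trans_le ((hy k).nrm2_restrict_mem_Icc hc).1
      nrmP_le := fun k => ?_
      nrm2_le := fun k => ?_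
      weight_le := fun k => ?_
      omegaE_rpow_le := fun k => ?_ }
  · calc nrmP (restrict (W k) (y k)) ≤ nrmP (y k) := norm_lpRestrict_le (W k) (y k).pair.1
      _ ≤ 1 := (y k).nrmP_le_norm.trans_eq (hy k).norm_eq_one
      _ ≤ K := hK
  · calc nrm2 (restrict (W k) (y k)) ≤ nrm2 (y k) := norm_lpRestrict_le (W k) (y k).pair.2
      _ ≤ δ⁻¹ * nrm2 (restrict (E k) (y k)) := (le_inv_mul_iff₀ hδ).2 (hy k).mul_nrm2_le
      _ ≤ K * nrm2 (restrict (E k) (y k)) := mul_le_mul_of_nonneg_right hδK (Xpw.nrm2_nonneg _)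
  · rw [core_eq]
    exact le_mul_of_one_le_left (Xpw.nrm2_nonneg _) hK
  · rw [core_eq]
    exact (hy k).omegaE_rpow_le.trans (mul_le_mul_of_nonneg_right hcK (Xpw.nrm2_nonneg _))

theorem exists_hasLeftInverse_of_eventually_isHump (hp : 2 < p) (hw : ∀ n, 0 ≤ w n)
    (hX : IsClosed (X : Set (Xpw p w))) (hc : 0 < c) (hδ : 0 < δ) {ε ε' : ℕ → ℝ}
    (hε' : ∀ k, 0 < ε' k)
    (h : ∀ k, ∀ θ > 0, ∀ᶠ N in Filter.atTop, ∃ x E, IsHump X c δ (ε k) (ε' k) x E ∧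
      E ⊆ Set.Ici N ∧ ‖restrict (Set.Iio N) x‖ ≤ θ) :
    ∃ v : ℕ → ℝ, (∀ k, v k ∈ Set.Icc (ε' k / c) (ε k / c)) ∧
      ∃ T : Xpw p v →L[ℝ] Xpw p w, T.HasLeftInverse ∧ ∀ x, T x ∈ X := by
  let K : ℝ := max 1 (max c δ⁻¹)
  have hK : 0 < K := zero_lt_one.trans_le (le_max_left _ _)
  obtain ⟨W, y, E, hW, hy⟩ := Xpw.exists_gliding_hump (θ := fun k => (2 * K)⁻¹ / 2 / 2 ^ k)
    (fun k => div_pos (half_pos (inv_pos.2 (mul_pos two_pos hK))) (by positivity))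
    (fun k _ _ hx => hx.finite) h
  have blocks := isBlockSeq_restrict_of_isHump hc hδ (le_max_left _ _ : 1 ≤ K)
    ((le_max_left _ _).trans (le_max_right _ _)) ((le_max_right _ _).trans (le_max_right _ _))
    hε' hW (fun k => (hy k).2.1) fun k => (hy k).1
  have norm_sub_le : ∀ k, ‖y k - restrict (W k) (y k)‖ ≤ (2 * K)⁻¹ / 2 / 2 ^ k := fun k => by
    have split : y k = restrict (W k) (y k) + restrict (W k)ᶜ (y k) := by
      rw [Xpw.restrict_add_restrict_of_disjoint disjoint_compl_right, Set.union_compl_self,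
        Xpw.restrict_eq_self (Set.subset_univ _)]
    rw [sub_eq_of_eq_add' split]
    exact (hy k).2.2
  obtain ⟨T, hT, hT_single⟩ := blocks.exists_hasLeftInverse_of_norm_sub_le hp hw norm_sub_le
  exact ⟨_, fun k => (hy k).1.nrm2_restrict_mem_Icc hc, T, hT,
    Xpw.apply_mem_of_forall_apply_single_mem hX fun k => hT_single k ▸ (hy k).1.mem⟩

end Humps

theorem infinite_preimage_unpair_fst (m : ℕ) : ((fun k => (Nat.unpair k).1) ⁻¹' {m}).Infinite :=
  Set.infinite_of_injective_forall_mem (f := Nat.pair m)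
    (fun _ _ h => (Nat.pair_eq_pair.1 h).2) fun j => by simp

theorem stmt6_general (p : ℝ) (hp : 2 < p) [Fact (1 ≤ ENNReal.ofReal p)]
    (w : ℕ → ℝ) (hw : ∀ n, 0 < w n)
    (X : Submodule ℝ (Xpw p w)) (hX : IsClosed (X : Set (Xpw p w)))
    (c δ : ℝ) (hc : 0 < c) (hδ : 0 < δ)
    (h : ∀ ε : ℝ, 0 < ε → ∃ ε' : ℝ, 0 < ε' ∧
      ∀ N : ℕ, 1 ≤ N → ∃ x : Xpw p w, x ∈ X ∧ ‖x‖ = 1 ∧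
        ∃ E : Set ℕ, E.Finite ∧ E ⊆ {n : ℕ | N ≤ n} ∧
          ‖restrict {n : ℕ | n < N} x‖ < (N : ℝ)⁻¹ ∧
          nrm2 (restrict E x) ≥ δ * nrm2 x ∧
          ε ≥ c * nrm2 (restrict E x) ∧
          c * nrm2 (restrict E x) ≥ omegaE p w E ^ ((p - 2) / (2 * p)) ∧
          omegaE p w E ^ ((p - 2) / (2 * p)) ≥ ε') :
    ∃ Y : Submodule ℝ (Xpw p w), Y ≤ X ∧ Nonempty (↥Y ≃L[ℝ] Xpw p w) ∧
      Y.ClosedComplemented := by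
  choose ε' hε' humps using fun m => h (c * w m) (mul_pos hc (hw m))
  have eventually_hump : ∀ m, ∀ θ > 0, ∀ᶠ N in Filter.atTop, ∃ x E,
      IsHump X c δ (c * w m) (ε' m) x E ∧ E ⊆ Set.Ici N ∧
        ‖restrict (Set.Iio N) x‖ ≤ θ := by
    intro m θ hθ
    filter_upwards [Filter.eventually_ge_atTop 1,
      tendsto_inv_atTop_nhds_zero_nat.eventually_le_const hθ] with N hN hNθ
    obtain ⟨x, hxX, hx, E, hE, hEN, ha, hb, hc₁, hc₂, hc₃⟩ := humps m N hN
    exact ⟨x, E, ⟨hxX, hx, hE, hb, hc₁, hc₂, hc₃⟩, hEN, ha.le.trans hNθ⟩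
  let b : ℕ → ℕ := fun k => (Nat.unpair k).1
  obtain ⟨v, hv, T, hT, hTX⟩ := exists_hasLeftInverse_of_eventually_isHump hp (fun n => (hw n).le)
    hX hc hδ (fun k => hε' (b k)) fun k => eventually_hump (b k)
  simp only [mul_div_cancel_left₀ _ hc.ne'] at hv
  obtain ⟨J, hJ⟩ := exists_hasLeftInverse_of_weight_mem_Icc hp hw (fun m => div_pos (hε' m) hc)
    infinite_preimage_unpair_fst hv
  have hTJ : (T ∘L J).HasLeftInverse := hT.comp hJ
  exact ⟨(T ∘L J).range, by rintro _ ⟨x, rfl⟩; exact hTX (J x),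
    ⟨((T ∘L J).equivRange hTJ.injective hTJ.isClosed_range).symm⟩,
    hTJ.closedComplemented_range⟩

/-- Theorem 1.3, 2 ⟹ 1: if `X` is a complemented subspace of `X_p` and
there are constants `c, δ > 0` such that for every `ε > 0` there is `0 < ε' < ε` such
that for every `N` there are a norm-one `x ∈ X` and a finite set `E ⊆ {N, N+1, …}` with
(a) `‖x_{|[1,N]}‖ < N⁻¹`, (b) `|x_{|E}|_2 ≥ δ |x|_2`,
(c) `ε ≥ c |x_{|E}|_2 ≥ ω(E)^{(p-2)/(2p)} ≥ ε'`, then `X` contains a subspace isomorphic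
to `X_p` which is complemented in `X_p`. -/
theorem stmt6 (p : ℝ) (hp : 2 < p) [Fact (1 ≤ ENNReal.ofReal p)]
    (w : ℕ → ℝ) (hw : IsXpWeight p w)
    (X : Submodule ℝ (Xpw p w)) (hX : X.ClosedComplemented)
    (c δ : ℝ) (hc : 0 < c) (hδ : 0 < δ)
    (h : ∀ ε : ℝ, 0 < ε → ∃ ε' : ℝ, 0 < ε' ∧ ε' < ε ∧
      ∀ N : ℕ, 1 ≤ N → ∃ x : Xpw p w, x ∈ X ∧ ‖x‖ = 1 ∧
        ∃ E : Set ℕ, E.Finite ∧ E ⊆ {n : ℕ | N ≤ n} ∧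
          ‖restrict {n : ℕ | n < N} x‖ < (N : ℝ)⁻¹ ∧
          nrm2 (restrict E x) ≥ δ * nrm2 x ∧
          ε ≥ c * nrm2 (restrict E x) ∧
          c * nrm2 (restrict E x) ≥ omegaE p w E ^ ((p - 2) / (2 * p)) ∧
          omegaE p w E ^ ((p - 2) / (2 * p)) ≥ ε') :
    ∃ Y : Submodule ℝ (Xpw p w), Y ≤ X ∧ Nonempty (↥Y ≃L[ℝ] Xpw p w) ∧
      Y.ClosedComplemented :=
  stmt6_general p hp w hw.1 X hX.isClosed c δ hc hδ fun ε hε =>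
    let ⟨ε', hε', _, hN⟩ := h ε hε
    ⟨ε', hε', hN⟩
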